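/- arXiv:1507.08106 — 3 statements merged into one kernel-verified Lean document; each statement's English description precedes it below -/
import Mathlib

section
/- Let (X,S) be a non-degenerate symmetric set-theoretic solution with X finite which is not the trivial solution, assume the homomorphism φ : G(X,S) → Sym(X) ⋉ ℤ^X determined by φ(x) = (f_x⁻¹, t_x) is injective, and let m ≥ 1 and (θ_i)_{i ∈ X} be a family of elements of G(X,S) with φ(θ_i) = (id, m·t_i) for every i ∈ X. Then there exists i ∈ X such that the centralizer of θ_i in G(X,S) is a proper subgroup of G(X,S). -/
namespace YB

variable {X : Type*}

/-- `gmap S x y = g_x(y)`, the first component of `S (x, y)`. -/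
def gmap (S : X × X → X × X) (x y : X) : X := (S (x, y)).1

/-- `fmap S y x = f_y(x)`, the second component of `S (x, y)`. -/
def fmap (S : X × X → X × X) (y x : X) : X := (S (x, y)).2

/-- Non-degeneracy: each `f_x` and each `g_x` is bijective. -/
def Nondeg (S : X × X → X × X) : Prop :=
  ∀ x : X, Function.Bijective (fmap S x) ∧ Function.Bijective (gmap S x)

/-- Involutivity: `S ∘ S = id`. -/
def Involutive (S : X × X → X × X) : Prop := ∀ p : X × X, S (S p) = p

/-- `S` acting on the first two components of `X³`. -/
def S12 (S : X × X → X × X) : X × X × X → X × X × X :=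
  fun p => ((S (p.1, p.2.1)).1, (S (p.1, p.2.1)).2, p.2.2)

/-- `S` acting on the last two components of `X³`. -/
def S23 (S : X × X → X × X) : X × X × X → X × X × X :=
  fun p => (p.1, S (p.2.1, p.2.2))

/-- The braid relation `S¹² S²³ S¹² = S²³ S¹² S²³`. -/
def Braided (S : X × X → X × X) : Prop :=
  S12 S ∘ S23 S ∘ S12 S = S23 S ∘ S12 S ∘ S23 S

/-- The trivial solution: all `f_x` and `g_x` are the identity. -/
def IsTrivialSol (S : X × X → X × X) : Prop :=
  ∀ x : X, fmap S x = id ∧ gmap S x = id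

/-- The defining relators `x y (g_x(y) f_y(x))⁻¹` of the structure group. -/
def rels (S : X × X → X × X) : Set (FreeGroup X) :=
  {r | ∃ x y : X, r = FreeGroup.of x * FreeGroup.of y *
      (FreeGroup.of (gmap S x y) * FreeGroup.of (fmap S y x))⁻¹}

/-- The structure group `G(X,S) = ⟨X ∣ x y = g_x(y) f_y(x)⟩`. -/
abbrev StructureGroup (S : X × X → X × X) := PresentedGroup (rels S)

/-- A permutation `σ` of `X` acts on the free abelian group `ℤ^X` by permuting the
basis: `σ • t_x = t_{σ x}` (i.e. `(σ • w) i = w (σ⁻¹ i)`). -/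
def permAddAut (σ : Equiv.Perm X) : (X → ℤ) ≃+ (X → ℤ) where
  toFun w := w ∘ σ.symm
  invFun w := w ∘ σ
  left_inv w := by funext i; simp
  right_inv w := by funext i; simp
  map_add' a b := rfl

/-- The action of `Sym(X)` on `ℤ^X` (written multiplicatively) by permuting the basis,
as a homomorphism `Sym(X) →* Aut(ℤ^X)`. -/
def permHom : Equiv.Perm X →* MulAut (Multiplicative (X → ℤ)) where
  toFun σ := AddEquiv.toMultiplicative (permAddAut σ)
  map_one' := by apply MulEquiv.ext; intro w; rfl
  map_mul' σ τ := by apply MulEquiv.ext; intro w; rfl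

/-- The basis element `t_x` of `ℤ^X` (written multiplicatively). -/
def tvec [DecidableEq X] (x : X) : Multiplicative (X → ℤ) :=
  Multiplicative.ofAdd (Pi.single x 1)

/-- `f_x` as a permutation of `X` (given non-degeneracy). -/
noncomputable def fPerm (S : X × X → X × X) (hf : ∀ x : X, Function.Bijective (fmap S x))
    (x : X) : Equiv.Perm X :=
  Equiv.ofBijective _ (hf x)

/-- The element `f_x⁻¹ t_x` of `Sym(X) ⋉ ℤ^X`, the image of the generator `x` under the
homomorphism `φ` of Etingof–Schedler–Soloviev. -/
noncomputable def phiGen [DecidableEq X] (S : X × X → X × X)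
    (hf : ∀ x : X, Function.Bijective (fmap S x)) (x : X) :
    Multiplicative (X → ℤ) ⋊[permHom] Equiv.Perm X :=
  SemidirectProduct.inr (fPerm S hf x)⁻¹ * SemidirectProduct.inl (tvec x)

/-- Given `φ : G(X,S) → Sym(X) ⋉ ℤ^X`, `piMap φ g` is the `ℤ^X`-component `w` of
`φ g`, where `φ g = α · w` with `α ∈ Sym(X)`, `w ∈ ℤ^X`. -/
noncomputable def piMap {G : Type*} [Group G]
    (φ : G →* Multiplicative (X → ℤ) ⋊[permHom] Equiv.Perm X) (g : G) : X → ℤ :=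
  Multiplicative.toAdd (permHom ((φ g).right)⁻¹ ((φ g).left))

/-!
In `Sym(X) ⋉ ℤ^X`, an element commutes with a nonzero multiple of `t_i` exactly when its
permutation part fixes `i`. If `θ i` is central, it commutes with every generator `x`, whose image
has permutation part `f_x⁻¹`, so every `f_x` fixes `i`. If this happens for all `i`, then every
`f_x` is the identity, and `S` being an involution forces every `g_x` to be the identity as well.
-/

theorem isTrivialSol_iff_forall_fmap_eq_id {S : X × X → X × X} (hinv : Involutive S) :
    IsTrivialSol S ↔ ∀ x, fmap S x = id := by
  refine ⟨fun h x => (h x).1, fun hf x => ⟨hf x, funext fun y => ?_⟩⟩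
  calc gmap S x y = fmap S (S (x, y)).2 (S (x, y)).1 := by rw [hf]; rfl
    _ = (S (S (x, y))).2 := rfl
    _ = y := by rw [hinv]

theorem commute_inl_iff {N H : Type*} [CommGroup N] [Group H] {ψ : H →* MulAut N}
    {g : N ⋊[ψ] H} {n : N} : Commute g (SemidirectProduct.inl n) ↔ ψ g.right n = n := by
  simp [commute_iff_eq, SemidirectProduct.ext_iff, mul_comm n]

section

variable [DecidableEq X]

theorem permHom_ofAdd_single (σ : Equiv.Perm X) (i : X) (a : ℤ) :
    permHom σ (Multiplicative.ofAdd (Pi.single i a)) =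
      Multiplicative.ofAdd (Pi.single (σ i) a) :=
  congrArg Multiplicative.ofAdd (Pi.single_comp_equiv σ.symm i a)

theorem commute_inl_single_iff {g : Multiplicative (X → ℤ) ⋊[permHom] Equiv.Perm X} {i : X}
    {a : ℤ} (ha : a ≠ 0) :
    Commute g (SemidirectProduct.inl (Multiplicative.ofAdd (Pi.single i a))) ↔
      g.right i = i := by
  rw [commute_inl_iff, permHom_ofAdd_single, Multiplicative.ofAdd.apply_eq_iff_eq]
  refine ⟨fun h => ?_, fun h => by rw [h]⟩
  by_contra hne
  exact ha (by simpa [Ne.symm hne] using (congrFun h i).symm)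

theorem phiGen_right (S : X × X → X × X) (hf : ∀ x, Function.Bijective (fmap S x)) (x : X) :
    (phiGen S hf x).right = (fPerm S hf x)⁻¹ := by
  simp [phiGen]

theorem fmap_apply_eq_self_of_commute {S : X × X → X × X}
    (hf : ∀ x, Function.Bijective (fmap S x)) {x i : X} {a : ℤ} (ha : a ≠ 0)
    (h : Commute (phiGen S hf x)
      (SemidirectProduct.inl (Multiplicative.ofAdd (Pi.single i a)))) :
    fmap S x i = i := by
  rw [commute_inl_single_iff ha, phiGen_right, Equiv.Perm.inv_eq_iff_eq] at h
  exact h.symm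

theorem exists_frozen_centralizer_ne_top_general {G : Type*} [Group G] {S : X × X → X × X}
    (hf : ∀ x, Function.Bijective (fmap S x)) (hinv : Involutive S) (hnt : ¬ IsTrivialSol S)
    (φ : G →* Multiplicative (X → ℤ) ⋊[permHom] Equiv.Perm X)
    {γ : X → G} (hφ : ∀ x, φ (γ x) = phiGen S hf x)
    {a : X → ℤ} (ha : ∀ i, a i ≠ 0) {θ : X → G}
    (hθ : ∀ i, φ (θ i) = SemidirectProduct.inl (Multiplicative.ofAdd (Pi.single i (a i)))) :
    ∃ i, Subgroup.centralizer {θ i} ≠ (⊤ : Subgroup G) := by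
  obtain ⟨x, i, hxi⟩ : ∃ x i, fmap S x i ≠ i := by
    simpa [isTrivialSol_iff_forall_fmap_eq_id hinv, funext_iff] using hnt
  refine ⟨i, fun htop => hxi (fmap_apply_eq_self_of_commute hf (ha i) ?_)⟩
  have hmem : γ x ∈ Subgroup.centralizer {θ i} := htop ▸ Subgroup.mem_top (γ x)
  have hcomm : Commute (γ x) (θ i) := Subgroup.mem_centralizer_singleton_iff.1 hmem
  simpa only [hφ, hθ] using hcomm.map φ

end

/-- If `(X,S)` is not the trivial solution, `φ : G(X,S) → Sym(X) ⋉ ℤ^X`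
(with `φ(x) = f_x⁻¹ t_x`) is injective, `m ≥ 1`, and `θ_i` are elements with
`φ(θ_i) = (id, m·t_i)`, then some `θ_i` has centralizer a proper subgroup of
`G(X,S)`. -/
theorem exists_frozen_centralizer_ne_top {X : Type*} [Fintype X] [DecidableEq X]
    (S : X × X → X × X)
    (hSbij : Function.Bijective S) (hnd : Nondeg S) (hinv : Involutive S)
    (hbr : Braided S) (hnt : ¬ IsTrivialSol S)
    (φ : StructureGroup S →* Multiplicative (X → ℤ) ⋊[permHom] Equiv.Perm X)
    (hφ : ∀ x : X, φ (PresentedGroup.of x) = phiGen S (fun x => (hnd x).1) x)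
    (hφinj : Function.Injective φ)
    (m : ℕ) (hm : 1 ≤ m) (θ : X → StructureGroup S)
    (hθ : ∀ i : X, φ (θ i) =
      SemidirectProduct.inl (Multiplicative.ofAdd (m • Pi.single i (1 : ℤ)))) :
    ∃ i : X, Subgroup.centralizer {θ i} ≠ (⊤ : Subgroup (StructureGroup S)) := by
  exact exists_frozen_centralizer_ne_top_general (fun x => (hnd x).1) hinv hnt φ hφ
    (fun _ => Nat.cast_ne_zero.2 (Nat.ne_of_gt hm))
    (fun i => by simpa [← Pi.single_smul] using hθ i)

end YB
end

section
/- Let (X,S) be a non-degenerate symmetric set-theoretic solution of the quantum Yang–Baxter equation with |X| = n ≥ 3, (X,S) not the trivial solution, and suppose all the permutations f_x (x ∈ X) are equal. Let K be the kernel of the augmentation homomorphism ε : G(X,S) → ℤ. Then the restriction of π to K is an injective group homomorphism whose image is the subgroup {w ∈ ℤ^X : the sum of the coordinates of w is 0}; in particular K is free abelian of rank n − 1, i.e. K ≅ ℤ^{n−1}. -/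
namespace YB

variable {X : Type*}

/-!
When every `f_x` equals a single permutation `e`, the relations of `G(X,S)` read
`x y = e⁻¹(y) e(x)`, and give `z (x⁻¹ y) z⁻¹ = e⁻¹(x)⁻¹ e⁻¹(y)` for every generator `z`. The
right-hand side does not depend on `z`, so the elements `x⁻¹ y` commute with each other, and the
subgroup they generate is normal; modulo it all generators agree, so it is the whole of `ker ε`.
Since `π` sends `x₀⁻¹ x` to `t_x - t_{x₀}`, and these vectors are a basis of the lattice of finitely
supported vectors of coordinate sum `0`, the commuting generators `x₀⁻¹ x` (`x ≠ x₀`) of `ker ε`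
satisfy no further relation.
-/

section FreeAbelian

theorem tvec_zpow [DecidableEq X] (x : X) (n : ℤ) :
    tvec x ^ n = Multiplicative.ofAdd ⇑(Finsupp.single x n) := by
  rw [tvec, ← ofAdd_zsmul, ← Pi.single_smul, smul_eq_mul, mul_one, Finsupp.single_eq_pi_single]

theorem closure_range_subtype_ne {H : Type*} [Group H] {f : X → H} {x₀ : X} (hf : f x₀ = 1) :
    Subgroup.closure (Set.range fun x : {x // x ≠ x₀} => f x) =
      Subgroup.closure (Set.range f) := by
  apply le_antisymm
  · exact Subgroup.closure_mono (Set.range_comp_subset_range _ f)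
  · rw [Subgroup.closure_le]
    rintro _ ⟨x, rfl⟩
    by_cases hx : x = x₀
    · rw [hx, hf]
      exact one_mem _
    · exact Subgroup.subset_closure ⟨⟨x, hx⟩, rfl⟩

theorem exists_mulEquiv_finsupp_of_closure_range_eq_top {I K : Type*} [DecidableEq I] [CommGroup K]
    {a : I → K} (hgen : Subgroup.closure (Set.range a) = ⊤) (p : K →* Multiplicative (I → ℤ))
    (hp : ∀ i, p (a i) = tvec i) :
    ∃ E : K ≃* Multiplicative (I →₀ ℤ), ∀ k, ⇑(E k).toAdd = (p k).toAdd := by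
  let s : Multiplicative (I →₀ ℤ) →* K := AddMonoidHom.toMultiplicativeLeft
    (Finsupp.liftAddHom fun i => zmultiplesHom (Additive K) (Additive.ofMul (a i)))
  have hs_single (i : I) (n : ℤ) : s (.ofAdd (Finsupp.single i n)) = a i ^ n := by
    simp [s]
  have hps : p.comp s = AddMonoidHom.toMultiplicative Finsupp.coeFnAddHom := by
    refine AddMonoidHom.toMultiplicative.symm.injective (Finsupp.addHom_ext fun i n => ?_)
    change (p (s (.ofAdd (Finsupp.single i n)))).toAdd = ⇑(Finsupp.single i n)
    rw [hs_single, map_zpow, hp, tvec_zpow, toAdd_ofAdd]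
  have hps_apply (v : Multiplicative (I →₀ ℤ)) : (p (s v)).toAdd = ⇑v.toAdd :=
    DFunLike.congr_fun hps v
  have hs_inj : Function.Injective s := fun v w h =>
    Multiplicative.toAdd.injective <| DFunLike.coe_injective <| by
      rw [← hps_apply, ← hps_apply, h]
  have hs_surj : Function.Surjective s := by
    rw [← MonoidHom.range_eq_top, eq_top_iff, ← hgen, Subgroup.closure_le]
    rintro _ ⟨i, rfl⟩
    exact ⟨.ofAdd (Finsupp.single i 1), by rw [hs_single, zpow_one]⟩
  let F : Multiplicative (I →₀ ℤ) ≃* K := MulEquiv.ofBijective s ⟨hs_inj, hs_surj⟩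
  refine ⟨F.symm, fun k => ?_⟩
  rw [← hps_apply]
  exact congrArg (fun k => (p k).toAdd) (F.apply_symm_apply k)

theorem nonempty_mulEquiv_fin_of_mulEquiv_finsupp [Finite X] {K : Type*} [Mul K] {x₀ : X}
    (E : K ≃* Multiplicative ({x // x ≠ x₀} →₀ ℤ)) :
    Nonempty (K ≃* Multiplicative (Fin (Nat.card X - 1) → ℤ)) := by
  have hcard : Nat.card {x // x ≠ x₀} = Nat.card X - 1 := by
    simpa using! Set.ncard_compl {x₀}
  let r : {x // x ≠ x₀} ≃ Fin (Nat.card X - 1) := Finite.equivFinOfCardEq hcard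
  exact ⟨E.trans ((Finsupp.linearEquivFunOnFinite ℤ ℤ _).trans
    (LinearEquiv.funCongrLeft ℤ ℤ r.symm)).toAddEquiv.toMultiplicative⟩

variable (X) in
/-- The lattice of finitely supported vectors of `ℤ^X` whose coordinates sum to `0`. Elements of
`X → ℤ` need not be finitely supported, so they are described as coercions of `X →₀ ℤ`. -/
noncomputable def sumZero : AddSubgroup (X → ℤ) :=
  (Finsupp.degree : (X →₀ ℤ) →+ ℤ).ker.map Finsupp.coeFnAddHom

theorem mem_sumZero_iff [Fintype X] {w : X → ℤ} : w ∈ sumZero X ↔ ∑ x, w x = 0 := by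
  constructor
  · rintro ⟨f, hf, rfl⟩
    rwa [SetLike.mem_coe, AddMonoidHom.mem_ker, Finsupp.degree_eq_sum] at hf
  · intro hw
    refine ⟨Finsupp.equivFunOnFinite.symm w, ?_, rfl⟩
    rwa [SetLike.mem_coe, AddMonoidHom.mem_ker, Finsupp.degree_eq_sum]

variable [DecidableEq X]

theorem closure_range_inv_tvec_mul_tvec (x₀ : X) :
    Subgroup.closure (Set.range fun x : {x // x ≠ x₀} => (tvec x₀)⁻¹ * tvec (x : X)) =
      AddSubgroup.toSubgroup (sumZero X) := by
  rw [closure_range_subtype_ne (f := fun x => (tvec x₀)⁻¹ * tvec x) (inv_mul_cancel _)]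
  apply le_antisymm
  · rw [Subgroup.closure_le]
    rintro _ ⟨x, rfl⟩
    refine ⟨-Finsupp.single x₀ 1 + Finsupp.single x 1, by simp, ?_⟩
    rw [map_add, map_neg, Finsupp.coeFnAddHom, AddMonoidHom.coe_mk, ZeroHom.coe_mk,
      Finsupp.single_eq_pi_single, Finsupp.single_eq_pi_single]
    rfl
  · set D := Subgroup.closure (Set.range fun x => (tvec x₀)⁻¹ * tvec x)
    have hdegree (f : X →₀ ℤ) : tvec x₀ ^ (-f.degree) * .ofAdd ⇑f ∈ D := by
      induction f using Finsupp.induction_linear with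
      | zero => simp
      | add f g hf hg =>
        convert D.mul_mem hf hg using 1
        rw [map_add, neg_add, zpow_add, Finsupp.coe_add, ofAdd_add, mul_mul_mul_comm]
      | single x n =>
        convert D.zpow_mem (Subgroup.subset_closure ⟨x, rfl⟩) n using 1
        rw [Finsupp.degree_single, mul_zpow, inv_zpow', tvec_zpow x n]
    rintro _ ⟨f, hf, rfl⟩
    have := hdegree f
    rwa [AddMonoidHom.mem_ker.1 hf, neg_zero, zpow_zero, one_mul] at this

theorem free_abelian_of_map_eq_inv_tvec_mul_tvec {K : Type*} [CommGroup K] {x₀ : X}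
    {a : {x // x ≠ x₀} → K} (hgen : Subgroup.closure (Set.range a) = ⊤)
    (p : K →* Multiplicative (X → ℤ)) (hp : ∀ x, p (a x) = (tvec x₀)⁻¹ * tvec (x : X)) :
    Function.Injective p ∧ p.range = AddSubgroup.toSubgroup (sumZero X) ∧
      Nonempty (K ≃* Multiplicative ({x // x ≠ x₀} →₀ ℤ)) := by
  let restrict : Multiplicative (X → ℤ) →* Multiplicative ({x // x ≠ x₀} → ℤ) :=
    AddMonoidHom.toMultiplicative (LinearMap.funLeft ℤ ℤ Subtype.val).toAddMonoidHom
  have hrestrict (x : {x // x ≠ x₀}) : (restrict.comp p) (a x) = tvec x := by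
    rw [MonoidHom.comp_apply, hp]
    refine Multiplicative.toAdd.injective (funext fun y => ?_)
    change (-Pi.single x₀ 1 + Pi.single (x : X) 1 : X → ℤ) y = (Pi.single x 1 : _ → ℤ) y
    simp [Pi.single_apply, y.2, Subtype.ext_iff]
  obtain ⟨E, hE⟩ := exists_mulEquiv_finsupp_of_closure_range_eq_top hgen _ hrestrict
  refine ⟨?_, ?_, ⟨E⟩⟩
  · have hinj : Function.Injective (restrict.comp p) := fun k l h =>
      E.injective <| Multiplicative.toAdd.injective <| DFunLike.coe_injective <| by
        rw [hE, hE, h]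
    exact Function.Injective.of_comp (f := restrict) hinj
  · rw [MonoidHom.range_eq_map, ← hgen, MonoidHom.map_closure, ← Set.range_comp,
      ← closure_range_inv_tvec_mul_tvec x₀]
    exact congrArg _ (congrArg _ (funext hp))

end FreeAbelian

section PermutationRelations

variable {G : Type*} [Group G]

/-- The elements `x⁻¹ y` of a group `G` containing a copy `o` of `X`. -/
def ratios (o : X → G) : Set G := Set.range fun p : X × X => (o p.1)⁻¹ * o p.2

/-- The relations `x y = e⁻¹(y) e(x)`: those of the structure group of the permutation solution
`S(x, y) = (e⁻¹(y), e(x))`. -/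
def PermutationRelations (e : Equiv.Perm X) (o : X → G) : Prop :=
  ∀ x y, o x * o y = o (e.symm y) * o (e x)

theorem closure_ratios_eq_closure_range (o : X → G) (x₀ : X) :
    Subgroup.closure (ratios o) = Subgroup.closure (Set.range fun x => (o x₀)⁻¹ * o x) := by
  apply le_antisymm
  · rw [Subgroup.closure_le]
    rintro _ ⟨⟨x, y⟩, rfl⟩
    have hmem (x : X) : (o x₀)⁻¹ * o x ∈ Subgroup.closure (Set.range fun x => (o x₀)⁻¹ * o x) :=
      Subgroup.subset_closure ⟨x, rfl⟩
    simpa [mul_assoc] using mul_mem (inv_mem (hmem x)) (hmem y)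
  · apply Subgroup.closure_mono
    rintro _ ⟨x, rfl⟩
    exact ⟨(x₀, x), rfl⟩

theorem ker_eq_closure_ratios [Nonempty X] {o : X → G}
    (hgen : Subgroup.closure (Set.range o) = ⊤) (hnormal : (Subgroup.closure (ratios o)).Normal)
    {ε : G →* Multiplicative ℤ} (hε : ∀ x, ε (o x) = .ofAdd 1) :
    ε.ker = Subgroup.closure (ratios o) := by
  set D := Subgroup.closure (ratios o)
  apply le_antisymm
  · obtain ⟨x₀⟩ := ‹Nonempty X›
    have hfactor : QuotientGroup.mk' D = (zpowersHom _ (QuotientGroup.mk' D (o x₀))).comp ε := by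
      refine MonoidHom.eq_of_eqOn_dense hgen ?_
      rintro _ ⟨x, rfl⟩
      have hmk : (o x₀ : G ⧸ D) = o x := QuotientGroup.eq.2 (Subgroup.subset_closure ⟨(x₀, x), rfl⟩)
      simp [hε, hmk]
    intro g hg
    rw [← QuotientGroup.ker_mk' D, hfactor, MonoidHom.mem_ker, MonoidHom.comp_apply, hg, map_one]
  · rw [Subgroup.closure_le]
    rintro _ ⟨⟨x, y⟩, rfl⟩
    simp [MonoidHom.mem_ker, hε]

namespace PermutationRelations

variable {e : Equiv.Perm X} {o : X → G}

theorem mul_inv_eq (h : PermutationRelations e o) (x y : X) :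
    o x * (o y)⁻¹ = (o (e.symm y))⁻¹ * o (e.symm x) := by
  have hrel := h (e.symm y) x
  rw [e.apply_symm_apply] at hrel
  rw [eq_inv_mul_iff_mul_eq, ← mul_assoc, hrel, mul_inv_cancel_right]

theorem conj_inv_mul (h : PermutationRelations e o) (x y z : X) :
    o z * ((o x)⁻¹ * o y) * (o z)⁻¹ = (o (e.symm x))⁻¹ * o (e.symm y) := by
  calc o z * ((o x)⁻¹ * o y) * (o z)⁻¹
      = o z * (o x)⁻¹ * (o y * (o z)⁻¹) := by group
    _ = (o (e.symm x))⁻¹ * o (e.symm z) * ((o (e.symm z))⁻¹ * o (e.symm y)) := by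
        rw [h.mul_inv_eq, h.mul_inv_eq]
    _ = (o (e.symm x))⁻¹ * o (e.symm y) := by group

theorem commute_inv_mul (h : PermutationRelations e o) (x y z w : X) :
    Commute ((o x)⁻¹ * o y) ((o z)⁻¹ * o w) := by
  have hconj := (h.conj_inv_mul z w y).trans (h.conj_inv_mul z w x).symm
  calc (o x)⁻¹ * o y * ((o z)⁻¹ * o w)
      = (o x)⁻¹ * (o y * ((o z)⁻¹ * o w) * (o y)⁻¹) * o y := by group
    _ = (o x)⁻¹ * (o x * ((o z)⁻¹ * o w) * (o x)⁻¹) * o y := by rw [hconj]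
    _ = (o z)⁻¹ * o w * ((o x)⁻¹ * o y) := by group

theorem isMulCommutative_closure_ratios (h : PermutationRelations e o) :
    IsMulCommutative (Subgroup.closure (ratios o)) :=
  Subgroup.isMulCommutative_closure <| by
    rintro _ ⟨⟨x, y⟩, rfl⟩ _ ⟨⟨z, w⟩, rfl⟩
    exact h.commute_inv_mul x y z w

theorem normal_closure_ratios (h : PermutationRelations e o)
    (hgen : Subgroup.closure (Set.range o) = ⊤) : (Subgroup.closure (ratios o)).Normal := by
  have hmem (z : X) : o z ∈ Subgroup.normalizer (ratios o) := by
    have hconj : MulAut.conj (o z) ∘ (fun p : X × X => (o p.1)⁻¹ * o p.2) =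
        (fun p : X × X => (o p.1)⁻¹ * o p.2) ∘ Prod.map e.symm e.symm :=
      funext fun p => h.conj_inv_mul p.1 p.2 z
    rw [Subgroup.mem_normalizer_iff_conj_image_eq, ratios, ← Set.range_comp, hconj,
      (e.symm.surjective.prodMap e.symm.surjective).range_comp]
  rw [← Subgroup.normalizer_eq_top_iff, eq_top_iff, ← hgen, Subgroup.closure_le]
  rintro _ ⟨z, rfl⟩
  exact Subgroup.normalizer_le_normalizer_closure _ (hmem z)

end PermutationRelations

end PermutationRelations

section Cocycle

variable {G : Type*} [Group G] (φ : G →* Multiplicative (X → ℤ) ⋊[permHom] Equiv.Perm X)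

theorem piMap_mul (a b : G) :
    piMap φ (a * b) = permAddAut (φ b).right⁻¹ (piMap φ a) + piMap φ b := by
  rw [piMap, map_mul, SemidirectProduct.mul_left, SemidirectProduct.mul_right, mul_inv_rev,
    map_mul permHom, MulAut.mul_apply, map_mul (permHom _), map_inv permHom (φ a).right,
    MulAut.inv_apply_self, map_mul, ← map_inv]
  rfl

/-- The restriction of `π` to a subgroup of elements whose component in `Sym(X)` is trivial. -/
noncomputable def piHom (K : Subgroup G) (hK : ∀ g ∈ K, (φ g).right = 1) :
    K →* Multiplicative (X → ℤ) :=
  MonoidHom.mk' (fun g => .ofAdd (piMap φ g)) fun a b => by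
    rw [Subgroup.coe_mul, piMap_mul, hK b b.2, inv_one]
    rfl

variable {φ} [DecidableEq X] {e : Equiv.Perm X} {o : X → G}

theorem piMap_inv_mul
    (hφ : ∀ x, φ (o x) = SemidirectProduct.inr e⁻¹ * SemidirectProduct.inl (tvec x))
    (x y : X) :
    .ofAdd (piMap φ ((o x)⁻¹ * o y)) = (tvec x)⁻¹ * tvec y := by
  have hφxy : φ ((o x)⁻¹ * o y) = SemidirectProduct.inl ((tvec x)⁻¹ * tvec y) := by
    rw [map_mul, map_inv, hφ, hφ, mul_inv_rev, mul_assoc, inv_mul_cancel_left, map_mul, map_inv]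
  rw [piMap, hφxy, SemidirectProduct.right_inl, inv_one, map_one]
  rfl

theorem right_eq_one_of_mem_ker
    (hφ : ∀ x, φ (o x) = SemidirectProduct.inr e⁻¹ * SemidirectProduct.inl (tvec x))
    (hgen : Subgroup.closure (Set.range o) = ⊤)
    {ε : G →* Multiplicative ℤ} (hε : ∀ x, ε (o x) = .ofAdd 1) :
    ∀ g ∈ ε.ker, (φ g).right = 1 := by
  have hfactor : SemidirectProduct.rightHom.comp φ = (zpowersHom _ e⁻¹).comp ε := by
    refine MonoidHom.eq_of_eqOn_dense hgen ?_
    rintro _ ⟨x, rfl⟩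
    simp [hφ, hε]
  intro g hg
  rw [← SemidirectProduct.rightHom_eq_right, ← MonoidHom.comp_apply, hfactor,
    MonoidHom.comp_apply, hg, map_one]

end Cocycle

section PermutationGroup

variable {G : Type*} [Group G] [DecidableEq X] {e : Equiv.Perm X} {o : X → G}

open scoped IsMulCommutative in
theorem ker_free_abelian_of_permutationRelations (hgen : Subgroup.closure (Set.range o) = ⊤)
    (hrel : PermutationRelations e o) {φ : G →* Multiplicative (X → ℤ) ⋊[permHom] Equiv.Perm X}
    (hφ : ∀ x, φ (o x) = SemidirectProduct.inr e⁻¹ * SemidirectProduct.inl (tvec x))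
    {ε : G →* Multiplicative ℤ} (hε : ∀ x, ε (o x) = .ofAdd 1) (x₀ : X) :
    let p := piHom φ ε.ker (right_eq_one_of_mem_ker hφ hgen hε)
    Function.Injective p ∧ p.range = AddSubgroup.toSubgroup (sumZero X) ∧
      Nonempty (ε.ker ≃* Multiplicative ({x // x ≠ x₀} →₀ ℤ)) := by
  have : Nonempty X := ⟨x₀⟩
  have hker : ε.ker = Subgroup.closure (ratios o) :=
    ker_eq_closure_ratios hgen (hrel.normal_closure_ratios hgen) hε
  have : IsMulCommutative ε.ker := hker ▸ hrel.isMulCommutative_closure_ratios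
  let a (x : {x // x ≠ x₀}) : ε.ker := ⟨(o x₀)⁻¹ * o x, by simp [MonoidHom.mem_ker, hε]⟩
  have ha : Subgroup.closure (Set.range a) = ⊤ := by
    apply Subgroup.map_injective ε.ker.subtype_injective
    rw [MonoidHom.map_closure, ← Set.range_comp, ← MonoidHom.range_eq_map, Subgroup.range_subtype]
    calc Subgroup.closure (Set.range fun x : {x // x ≠ x₀} => (o x₀)⁻¹ * o x)
        = Subgroup.closure (Set.range fun x => (o x₀)⁻¹ * o x) :=
          closure_range_subtype_ne (f := fun x => (o x₀)⁻¹ * o x) (inv_mul_cancel _)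
      _ = ε.ker := by rw [hker, closure_ratios_eq_closure_range o x₀]
  exact free_abelian_of_map_eq_inv_tvec_mul_tvec ha _ fun x => piMap_inv_mul hφ x₀ x

end PermutationGroup

section StructureGroup

variable {S : X × X → X × X}

theorem gmap_eq_symm_of_fmap_eq (hinv : Involutive S) {e : Equiv.Perm X} (he : ∀ x, fmap S x = e)
    (x y : X) : gmap S x y = e.symm y := by
  rw [Equiv.eq_symm_apply, ← he (fmap S y x)]
  exact congrArg Prod.snd (hinv (x, y))

theorem permutationRelations_of_fmap_eq (hinv : Involutive S) {e : Equiv.Perm X}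
    (he : ∀ x, fmap S x = e) :
    PermutationRelations e (PresentedGroup.of : X → StructureGroup S) := by
  intro x y
  have hrel : PresentedGroup.mk (rels S) (FreeGroup.of x * FreeGroup.of y) =
      PresentedGroup.mk (rels S) (FreeGroup.of (gmap S x y) * FreeGroup.of (fmap S y x)) :=
    PresentedGroup.mk_eq_mk_of_mul_inv_mem ⟨x, y, rfl⟩
  rwa [he, gmap_eq_symm_of_fmap_eq hinv he, map_mul, map_mul] at hrel

end StructureGroup

theorem ker_aug_free_abelian_general {X : Type*} [DecidableEq X] (S : X × X → X × X)
    (hf : ∀ x : X, Function.Bijective (fmap S x)) (hinv : Involutive S)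
    (hfeq : ∀ x y : X, fmap S x = fmap S y)
    (φ : StructureGroup S →* Multiplicative (X → ℤ) ⋊[permHom] Equiv.Perm X)
    (hφ : ∀ x : X, φ (PresentedGroup.of x) = phiGen S hf x)
    (ε : StructureGroup S →* Multiplicative ℤ)
    (hε : ∀ x : X, ε (PresentedGroup.of x) = Multiplicative.ofAdd 1) (x₀ : X) :
    (∀ a b : StructureGroup S, a ∈ ε.ker → b ∈ ε.ker →
        piMap φ (a * b) = piMap φ a + piMap φ b) ∧
    Set.InjOn (piMap φ) (ε.ker : Set (StructureGroup S)) ∧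
    piMap φ '' (ε.ker : Set (StructureGroup S)) = sumZero X ∧
    Nonempty (ε.ker ≃* Multiplicative ({x // x ≠ x₀} →₀ ℤ)) := by
  have he (x : X) : fPerm S hf x = fPerm S hf x₀ := Equiv.ext (congrFun (hfeq x x₀))
  have hgen : Subgroup.closure (Set.range (PresentedGroup.of : X → StructureGroup S)) = ⊤ :=
    PresentedGroup.closure_range_of _
  have hrel : PermutationRelations (fPerm S hf x₀) (PresentedGroup.of : X → StructureGroup S) :=
    permutationRelations_of_fmap_eq hinv (hfeq · x₀)
  have hφe (x : X) : φ (PresentedGroup.of x) =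
      SemidirectProduct.inr (fPerm S hf x₀)⁻¹ * SemidirectProduct.inl (tvec x) := by
    rw [hφ, phiGen, he]
  obtain ⟨hinj, hrange, hfree⟩ :=
    ker_free_abelian_of_permutationRelations hgen hrel hφe hε x₀
  let p := piHom φ ε.ker (right_eq_one_of_mem_ker hφe hgen hε)
  refine ⟨fun a b ha hb => ?_, fun a ha b hb h => ?_, ?_, hfree⟩
  · exact congrArg Multiplicative.toAdd (map_mul p ⟨a, ha⟩ ⟨b, hb⟩)
  · exact congrArg Subtype.val (@hinj ⟨a, ha⟩ ⟨b, hb⟩ h)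
  · exact (Set.image_eq_range _ _).trans
      ((MonoidHom.coe_range p).symm.trans (congrArg SetLike.coe hrange))

/-- For a non-trivial solution with `|X| = n ≥ 3` in which all the
permutations `f_x` are equal, the restriction of `π` to `K = ker ε` is an injective
group homomorphism whose image is `{w ∈ ℤ^X : Σ w = 0}`; in particular
`K ≅ ℤ^{n-1}`. -/
theorem ker_aug_free_abelian {X : Type*} [Fintype X] [DecidableEq X]
    (S : X × X → X × X)
    (hSbij : Function.Bijective S) (hnd : Nondeg S) (hinv : Involutive S)
    (hbr : Braided S) (hnt : ¬ IsTrivialSol S) (hcard : 3 ≤ Nat.card X)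
    (hfeq : ∀ x y : X, fmap S x = fmap S y)
    (φ : StructureGroup S →* Multiplicative (X → ℤ) ⋊[permHom] Equiv.Perm X)
    (hφ : ∀ x : X, φ (PresentedGroup.of x) = phiGen S (fun x => (hnd x).1) x)
    (ε : StructureGroup S →* Multiplicative ℤ)
    (hε : ∀ x : X, ε (PresentedGroup.of x) = Multiplicative.ofAdd 1) :
    (∀ a b : StructureGroup S, a ∈ ε.ker → b ∈ ε.ker →
        piMap φ (a * b) = piMap φ a + piMap φ b) ∧
    Set.InjOn (piMap φ) (ε.ker : Set (StructureGroup S)) ∧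
    piMap φ '' (ε.ker : Set (StructureGroup S)) = {w : X → ℤ | ∑ x : X, w x = 0} ∧
    Nonempty (ε.ker ≃* Multiplicative (Fin (Nat.card X - 1) → ℤ)) := by
  obtain ⟨x₀⟩ : Nonempty X := (Nat.card_pos_iff.1 (by lia)).1
  obtain ⟨hmul, hinj, himage, ⟨E⟩⟩ :=
    ker_aug_free_abelian_general S (fun x => (hnd x).1) hinv hfeq φ hφ ε hε x₀
  exact ⟨hmul, hinj, himage.trans (Set.ext fun _ => mem_sumZero_iff),
    nonempty_mulEquiv_fin_of_mulEquiv_finsupp E⟩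

end YB
end

section
/- Let (X,S) be a non-degenerate symmetric set-theoretic solution of the quantum Yang–Baxter equation with X finite. Then the assignment x ↦ (f_x⁻¹, t_x) extends to a well-defined group homomorphism φ : G(X,S) → Sym(X) ⋉ ℤ^X (it respects all the defining relations x y = g_x(y) f_y(x)), and φ is injective. -/
namespace YB

variable {X : Type*}

/-!
Let `ρ : G(X,S) → Sym(X)` be the action with `ρ(x) = f_x⁻¹`, and let `π(g)` be the `ℤ^X`-component
of `φ(g) = ρ(g) π(g)`. Since `π(x g) = π(g) + ρ(g)⁻¹ t_x`, the map `τ_y : g ↦ ρ(g)(y) · g` lifts the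
translation by `t_y`, that is, `π(τ_y g) = π(g) + t_y`. Writing `a = ρ(g)(y)` and `b = ρ(g)(z)`, one
has `τ_z τ_y g = f_a⁻¹(b) · a · g`, and the defining relations make this symmetric in `a` and `b`:
the `τ_y` commute. They are permutations because `u ↦ f_u⁻¹(u)` is one. So the free abelian group on
`X` acts on `G(X,S)`, transitively since `x · g = τ_y(g)` for `y = ρ(g)⁻¹(x)`, and `π` intertwines
this action with the free action by translations. Hence `π`, and a fortiori `φ`, is injective.
-/

section CommutingTranslations

variable {X G α A : Type*}

open scoped IsMulCommutative in
theorem exists_monoidHom_single_eq_zpow [Group G] {τ : X → G}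
    (hcomm : ∀ x y, Commute (τ x) (τ y)) :
    ∃ Λ : Multiplicative (X →₀ ℤ) →* G,
      ∀ x n, Λ (Multiplicative.ofAdd (Finsupp.single x n)) = τ x ^ n := by
  let H := Subgroup.closure (Set.range τ)
  have : IsMulCommutative H := Subgroup.isMulCommutative_closure <| by
    rintro _ ⟨x, rfl⟩ _ ⟨y, rfl⟩
    exact hcomm x y
  let t (x : X) : Additive H := .ofMul ⟨τ x, Subgroup.subset_closure ⟨x, rfl⟩⟩
  let Λ := AddMonoidHom.toMultiplicativeLeft (Finsupp.linearCombination ℤ t).toAddMonoidHom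
  exact ⟨H.subtype.comp Λ, fun x n ↦ by simp [Λ, t]⟩

theorem map_zpow_apply_of_map_apply [AddGroup A] {π : α → A} {σ : Equiv.Perm α} {v : A}
    (h : ∀ a, π (σ a) = π a + v) (n : ℤ) (a : α) : π ((σ ^ n) a) = π a + n • v := by
  have hinv (a : α) : π (σ⁻¹ a) = π a - v := by
    rw [eq_sub_iff_add_eq, ← h, Equiv.Perm.inv_def, Equiv.apply_symm_apply]
  induction n generalizing a with
  | zero => simp
  | succ n ih =>
    rw [zpow_add_one, Equiv.Perm.mul_apply, ih, h, add_comm (n : ℤ), one_add_zsmul, add_assoc]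
  | pred n ih =>
    rw [zpow_sub_one, Equiv.Perm.mul_apply, ih, hinv, sub_eq_neg_add (-(n : ℤ)), add_zsmul,
      neg_one_zsmul, ← add_assoc, ← sub_eq_add_neg]

theorem injective_of_commuting_translations [AddCommGroup A] {τ : X → Equiv.Perm α}
    (hcomm : ∀ x y, Commute (τ x) (τ y))
    (htrans : MulAction.IsPretransitive (Subgroup.closure (Set.range τ)) α)
    {b : X → A} (hb : LinearIndependent ℤ b) {π : α → A}
    (hπ : ∀ x a, π (τ x a) = π a + b x) : Function.Injective π := by
  obtain ⟨Λ, hΛ⟩ := exists_monoidHom_single_eq_zpow hcomm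
  have closure_le : Subgroup.closure (Set.range τ) ≤ Λ.range := by
    rw [Subgroup.closure_le]
    rintro _ ⟨x, rfl⟩
    exact ⟨.ofAdd (Finsupp.single x 1), by rw [hΛ, zpow_one]⟩
  have map_Λ (w : X →₀ ℤ) (a : α) :
      π (Λ (.ofAdd w) a) = π a + Finsupp.linearCombination ℤ b w := by
    induction w using Finsupp.induction_linear generalizing a with
    | zero => simp
    | add v w hv hw =>
      rw [ofAdd_add, map_mul, Equiv.Perm.mul_apply, hv, hw, map_add, add_assoc,
        add_comm (Finsupp.linearCombination ℤ b w)]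
    | single x n =>
      rw [hΛ, map_zpow_apply_of_map_apply (hπ x), Finsupp.linearCombination_single]
  intro a c hac
  obtain ⟨⟨h, hh⟩, rfl⟩ := htrans.exists_smul_eq a c
  obtain ⟨w, rfl⟩ := closure_le hh
  have hw : Finsupp.linearCombination ℤ b w.toAdd = 0 :=
    left_eq_add.mp (hac.trans (map_Λ w.toAdd a))
  rw [← map_zero (Finsupp.linearCombination ℤ b)] at hw
  have w_eq_one : w = 1 := hb hw
  simp [w_eq_one, Subgroup.smul_def]

end CommutingTranslations

section Solutions

variable {S : X × X → X × X}

theorem Nondeg.fmap_bijective (hnd : Nondeg S) (x : X) : Function.Bijective (fmap S x) :=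
  (hnd x).1

theorem Nondeg.gmap_bijective (hnd : Nondeg S) (x : X) : Function.Bijective (gmap S x) :=
  (hnd x).2

theorem fmap_fmap_gmap (hinv : Involutive S) (x y : X) :
    fmap S (fmap S y x) (gmap S x y) = y :=
  congrArg Prod.snd (hinv (x, y))

theorem gmap_gmap_fmap (hinv : Involutive S) (x y : X) :
    gmap S (gmap S x y) (fmap S y x) = x :=
  congrArg Prod.fst (hinv (x, y))

theorem fmap_eq_self_iff_gmap_eq_self (hnd : Nondeg S) (hinv : Involutive S) {u x : X} :
    fmap S u x = u ↔ gmap S x u = x := by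
  constructor <;> intro h
  · apply (hnd.fmap_bijective u).1
    simpa only [h] using fmap_fmap_gmap hinv x u
  · apply (hnd.gmap_bijective x).1
    simpa only [h] using gmap_gmap_fmap hinv x u

variable (hf : ∀ x, Function.Bijective (fmap S x))

theorem fPerm_apply (x y : X) : fPerm S hf x y = fmap S x y := rfl

theorem fPerm_mul_fPerm (hbr : Braided S) (x y : X) :
    fPerm S hf y * fPerm S hf x = fPerm S hf (fmap S y x) * fPerm S hf (gmap S x y) :=
  Equiv.ext fun a ↦ congrArg (fun p ↦ p.2.2) (congrFun hbr (a, x, y))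

/-- The diagonal permutation `u ↦ f_u⁻¹(u)` of `X`, denoted `T` by Etingof, Schedler and Soloviev;
its inverse is `x ↦ g_x⁻¹(x)`. -/
noncomputable def diagPerm (hnd : Nondeg S) (hinv : Involutive S) : Equiv.Perm X where
  toFun u := (fPerm S hnd.fmap_bijective u)⁻¹ u
  invFun x := (Equiv.ofBijective _ (hnd.gmap_bijective x)).symm x
  left_inv u := by
    rw [Equiv.symm_apply_eq, eq_comm, Equiv.ofBijective_apply,
      ← fmap_eq_self_iff_gmap_eq_self hnd hinv]
    exact (fPerm S hnd.fmap_bijective u).apply_symm_apply u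
  right_inv x := by
    rw [Equiv.Perm.inv_eq_iff_eq, eq_comm, fPerm_apply, fmap_eq_self_iff_gmap_eq_self hnd hinv]
    exact (Equiv.ofBijective _ (hnd.gmap_bijective x)).apply_symm_apply x

theorem diagPerm_apply (hnd : Nondeg S) (hinv : Involutive S) (u : X) :
    diagPerm hnd hinv u = (fPerm S hnd.fmap_bijective u)⁻¹ u := rfl

end Solutions

section StructureGroup

variable {S : X × X → X × X}

theorem of_mul_of (S : X × X → X × X) (x y : X) :
    (PresentedGroup.of x * PresentedGroup.of y : StructureGroup S) =
      PresentedGroup.of (gmap S x y) * PresentedGroup.of (fmap S y x) :=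
  PresentedGroup.mk_eq_mk_of_mul_inv_mem ⟨x, y, rfl⟩

theorem lift_eq_one_of_mem_rels {G : Type*} [Group G] {F : X → G}
    (hF : ∀ x y, F x * F y = F (gmap S x y) * F (fmap S y x)) :
    ∀ r ∈ rels S, FreeGroup.lift F r = 1 := by
  rintro _ ⟨x, y, rfl⟩
  simp only [map_mul, map_inv, FreeGroup.lift_apply_of, hF x y, mul_inv_cancel]

theorem of_inv_fPerm_mul_of (hf : ∀ x, Function.Bijective (fmap S x)) (hinv : Involutive S)
    (a b : X) :
    (PresentedGroup.of ((fPerm S hf a)⁻¹ b) * PresentedGroup.of a : StructureGroup S) =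
      PresentedGroup.of ((fPerm S hf b)⁻¹ a) * PresentedGroup.of b := by
  set x := (fPerm S hf a)⁻¹ b
  have fmap_eq : fmap S a x = b := (fPerm S hf a).apply_symm_apply b
  have gmap_eq : gmap S x a = (fPerm S hf b)⁻¹ a := by
    rw [Equiv.Perm.eq_inv_iff_eq, fPerm_apply, ← fmap_eq, fmap_fmap_gmap hinv]
  rw [of_mul_of, fmap_eq, gmap_eq]

/-- The action `ρ` of the structure group on `X` in which the generator `x` acts as `f_x⁻¹`. -/
noncomputable def permAction (hf : ∀ x, Function.Bijective (fmap S x)) (hbr : Braided S) :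
    StructureGroup S →* Equiv.Perm X :=
  PresentedGroup.toGroup <| lift_eq_one_of_mem_rels (F := fun x ↦ (fPerm S hf x)⁻¹) fun x y ↦ by
    rw [← mul_inv_rev, fPerm_mul_fPerm hf hbr, mul_inv_rev]

theorem permAction_of (hf : ∀ x, Function.Bijective (fmap S x)) (hbr : Braided S) (x : X) :
    permAction hf hbr (PresentedGroup.of x) = (fPerm S hf x)⁻¹ :=
  PresentedGroup.toGroup.of _

section Translation

variable (hnd : Nondeg S) (hinv : Involutive S) (hbr : Braided S)

/-- The permutation `g ↦ ρ(g)(y) · g` of the structure group, which lifts the translation of `ℤ^X`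
by `t_y`. The letter `u` removed by the inverse is recovered from `h = u g` as
`f_u⁻¹(u) = ρ(h)(y)`. -/
noncomputable def translation (y : X) : Equiv.Perm (StructureGroup S) where
  toFun g := PresentedGroup.of (permAction hnd.fmap_bijective hbr g y) * g
  invFun h := (PresentedGroup.of
    ((diagPerm hnd hinv).symm (permAction hnd.fmap_bijective hbr h y)))⁻¹ * h
  left_inv g := by
    beta_reduce
    rw [map_mul, permAction_of, Equiv.Perm.mul_apply, ← diagPerm_apply hnd hinv,
      Equiv.symm_apply_apply, inv_mul_cancel_left]
  right_inv h := by
    beta_reduce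
    set u := (diagPerm hnd hinv).symm (permAction hnd.fmap_bijective hbr h y) with hu
    have apply_eq : permAction hnd.fmap_bijective hbr h y =
        (fPerm S hnd.fmap_bijective u)⁻¹ u := by
      rw [← diagPerm_apply hnd hinv, hu, Equiv.apply_symm_apply]
    rw [map_mul, map_inv, permAction_of, inv_inv, Equiv.Perm.mul_apply, apply_eq,
      Equiv.Perm.inv_def, Equiv.apply_symm_apply, mul_inv_cancel_left]

theorem translation_apply (y : X) (g : StructureGroup S) :
    translation hnd hinv hbr y g =
      PresentedGroup.of (permAction hnd.fmap_bijective hbr g y) * g := rfl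

theorem commute_translation (y z : X) :
    Commute (translation hnd hinv hbr y) (translation hnd hinv hbr z) := by
  ext g
  simp only [Equiv.Perm.mul_apply, translation_apply, map_mul, permAction_of, ← mul_assoc]
  rw [of_inv_fPerm_mul_of _ hinv]

theorem exists_translation_apply_eq_of_mul (x : X) (g : StructureGroup S) :
    ∃ y, translation hnd hinv hbr y g = PresentedGroup.of x * g :=
  ⟨(permAction hnd.fmap_bijective hbr g)⁻¹ x, by
    rw [translation_apply, Equiv.Perm.inv_def, Equiv.apply_symm_apply]⟩

theorem isPretransitive_closure_range_translation :
    MulAction.IsPretransitive (Subgroup.closure (Set.range (translation hnd hinv hbr)))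
      (StructureGroup S) := by
  set H := Subgroup.closure (Set.range (translation hnd hinv hbr))
  have translation_mem (y : X) : translation hnd hinv hbr y ∈ H := Subgroup.subset_closure ⟨y, rfl⟩
  rw [MulAction.isPretransitive_iff_base (1 : StructureGroup S)]
  intro g
  have hg : g ∈ Subgroup.closure (Set.range (PresentedGroup.of (rels := rels S))) := by
    rw [PresentedGroup.closure_range_of]
    exact Subgroup.mem_top g
  induction hg using Subgroup.closure_induction_left with
  | one => exact ⟨1, one_smul _ _⟩
  | mul_left _ hx g _ ih =>
    obtain ⟨x, rfl⟩ := hx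
    obtain ⟨h, rfl⟩ := ih
    obtain ⟨y, hy⟩ := exists_translation_apply_eq_of_mul hnd hinv hbr x (h • 1)
    exact ⟨⟨_, translation_mem y⟩ * h, by rw [mul_smul]; exact hy⟩
  | inv_mul_cancel _ hx g _ ih =>
    obtain ⟨x, rfl⟩ := hx
    obtain ⟨h, rfl⟩ := ih
    obtain ⟨y, hy⟩ := exists_translation_apply_eq_of_mul hnd hinv hbr x
      ((PresentedGroup.of x)⁻¹ * h • 1)
    rw [mul_inv_cancel_left] at hy
    exact ⟨⟨_, translation_mem y⟩⁻¹ * h, by rw [mul_smul, inv_smul_eq_iff]; exact hy.symm⟩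

end Translation

end StructureGroup

section Phi

variable [DecidableEq X] {S : X × X → X × X}

theorem permHom_tvec (σ : Equiv.Perm X) (x : X) : permHom σ (tvec x) = tvec (σ x) := by
  apply Multiplicative.toAdd.injective
  funext i
  change (Pi.single x 1 : X → ℤ) (σ.symm i) = (Pi.single (σ x) 1 : X → ℤ) i
  simp only [Pi.single_apply, Equiv.symm_apply_eq]

theorem phiGen_mul_phiGen (hf : ∀ x, Function.Bijective (fmap S x)) (x y : X) :
    phiGen S hf x * phiGen S hf y =
      SemidirectProduct.inr (fPerm S hf y * fPerm S hf x)⁻¹ *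
        SemidirectProduct.inl (tvec (fmap S y x) * tvec y) := by
  rw [← fPerm_apply hf, ← permHom_tvec, map_mul SemidirectProduct.inl, SemidirectProduct.inl_aut]
  simp only [phiGen, mul_inv_rev, map_mul, map_inv]
  group

theorem phiGen_mul_phiGen_eq_gmap_fmap (hf : ∀ x, Function.Bijective (fmap S x))
    (hinv : Involutive S) (hbr : Braided S) (x y : X) :
    phiGen S hf x * phiGen S hf y = phiGen S hf (gmap S x y) * phiGen S hf (fmap S y x) := by
  rw [phiGen_mul_phiGen, phiGen_mul_phiGen, fmap_fmap_gmap hinv, fPerm_mul_fPerm hf hbr,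
    mul_comm (tvec y)]

/-- The homomorphism `φ : G(X,S) → Sym(X) ⋉ ℤ^X` with `φ(x) = f_x⁻¹ t_x`. -/
noncomputable def phi (hf : ∀ x, Function.Bijective (fmap S x)) (hinv : Involutive S)
    (hbr : Braided S) :
    StructureGroup S →* Multiplicative (X → ℤ) ⋊[permHom] Equiv.Perm X :=
  PresentedGroup.toGroup <|
    lift_eq_one_of_mem_rels (phiGen_mul_phiGen_eq_gmap_fmap hf hinv hbr)

theorem phi_of (hf : ∀ x, Function.Bijective (fmap S x)) (hinv : Involutive S)
    (hbr : Braided S) (x : X) :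
    phi hf hinv hbr (PresentedGroup.of x) = phiGen S hf x :=
  PresentedGroup.toGroup.of _

theorem right_phi (hf : ∀ x, Function.Bijective (fmap S x)) (hinv : Involutive S)
    (hbr : Braided S) (g : StructureGroup S) :
    (phi hf hinv hbr g).right = permAction hf hbr g := by
  have rightHom_comp_phi :
      SemidirectProduct.rightHom.comp (phi hf hinv hbr) = permAction hf hbr :=
    PresentedGroup.ext fun x ↦ by simp [phi_of, permAction_of, phiGen]
  exact DFunLike.congr_fun rightHom_comp_phi g

theorem piMap_of_mul (hf : ∀ x, Function.Bijective (fmap S x)) (hinv : Involutive S)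
    (hbr : Braided S) (x : X) (g : StructureGroup S) :
    piMap (phi hf hinv hbr) (PresentedGroup.of x * g) =
      piMap (phi hf hinv hbr) g + Pi.single ((permAction hf hbr g)⁻¹ x) 1 := by
  have component_eq : permHom (phi hf hinv hbr (PresentedGroup.of x * g)).right⁻¹
      (phi hf hinv hbr (PresentedGroup.of x * g)).left =
      permHom (phi hf hinv hbr g).right⁻¹ (phi hf hinv hbr g).left *
        tvec ((permAction hf hbr g)⁻¹ x) := by
    rw [← right_phi hf hinv, ← permHom_tvec, map_mul, phi_of]
    simp [phiGen, mul_comm]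
  exact congrArg Multiplicative.toAdd component_eq

theorem piMap_translation (hnd : Nondeg S) (hinv : Involutive S) (hbr : Braided S) (y : X)
    (g : StructureGroup S) :
    piMap (phi hnd.fmap_bijective hinv hbr) (translation hnd hinv hbr y g) =
      piMap (phi hnd.fmap_bijective hinv hbr) g + Pi.single y 1 := by
  rw [translation_apply, piMap_of_mul, Equiv.Perm.inv_def, Equiv.symm_apply_apply]

theorem piMap_phi_injective (hnd : Nondeg S) (hinv : Involutive S) (hbr : Braided S) :
    Function.Injective (piMap (phi hnd.fmap_bijective hinv hbr)) :=
  injective_of_commuting_translations (commute_translation hnd hinv hbr)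
    (isPretransitive_closure_range_translation hnd hinv hbr)
    (Pi.linearIndependent_single_one X ℤ) (piMap_translation hnd hinv hbr)

end Phi

theorem phi_exists_injective_general {X : Type*} [DecidableEq X] (S : X × X → X × X)
    (hnd : Nondeg S) (hinv : Involutive S) (hbr : Braided S) :
    ∃ φ : StructureGroup S →* Multiplicative (X → ℤ) ⋊[permHom] Equiv.Perm X,
      (∀ x : X, φ (PresentedGroup.of x) = phiGen S (fun x => (hnd x).1) x) ∧
      Function.Injective φ :=
  ⟨phi _ hinv hbr, phi_of _ hinv hbr, fun g h hgh ↦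
    piMap_phi_injective hnd hinv hbr (by simp only [piMap, hgh])⟩

/-- The assignment `x ↦ (f_x⁻¹, t_x)` extends to a well-defined group
homomorphism `φ : G(X,S) → Sym(X) ⋉ ℤ^X` (i.e. it respects the defining relations), and
`φ` is injective. -/
theorem phi_exists_injective {X : Type*} [Fintype X] [DecidableEq X]
    (S : X × X → X × X)
    (hSbij : Function.Bijective S) (hnd : Nondeg S) (hinv : Involutive S)
    (hbr : Braided S) :
    ∃ φ : StructureGroup S →* Multiplicative (X → ℤ) ⋊[permHom] Equiv.Perm X,
      (∀ x : X, φ (PresentedGroup.of x) = phiGen S (fun x => (hnd x).1) x) ∧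
      Function.Injective φ :=
  phi_exists_injective_general S hnd hinv hbr

end YB
end
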